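/- Let [a_1,…,a_r] and [b_1,…,b_s] be conjugate strings, and let c ≥ 2 be an integer such that the concatenated string [a_r,…,a_1, c, b_1,…,b_s] is a string of type T. Then this string is Du Val, i.e. c = 2 and all a_i and all b_j equal 2. -/

import Mathlib

/-- Hirzebruch–Jung continued fraction value of a list:
`hjValue [a₁, …, a_r] = a₁ - 1/(a₂ - 1/(⋯ - 1/a_r))`.
(For the empty list the value is `0`, and since `1/0 = 0` in `ℚ`,
`hjValue [a] = a`.) -/
def hjValue : List ℤ → ℚ
  | [] => 0
  | a :: l => (a : ℚ) - 1 / hjValue l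

/-- A *string* is a nonempty finite sequence of integers, all `≥ 2`. -/
def IsString (l : List ℤ) : Prop := l ≠ [] ∧ ∀ x ∈ l, 2 ≤ x

/-- Two strings are *conjugate* if their values are `m/q` and `m/(m-q)`
for some coprime integers `m > q ≥ 1`. -/
def IsConjugate (a b : List ℤ) : Prop :=
  ∃ m q : ℕ, 1 ≤ q ∧ q < m ∧ Nat.Coprime m q ∧
    hjValue a = (m : ℚ) / q ∧ hjValue b = (m : ℚ) / ((m : ℚ) - q)

/-- A string is of *type T* if its value, written in lowest terms `n/q` with
coprime `n > q ≥ 1`, satisfies `n ∣ (q+1)²`. -/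
def IsTString (l : List ℤ) : Prop :=
  IsString l ∧ ∃ n q : ℕ, 1 ≤ q ∧ q < n ∧ Nat.Coprime n q ∧
    hjValue l = (n : ℚ) / q ∧ n ∣ (q + 1) ^ 2

/-- A string is *Du Val* if all its entries equal `2`. -/
def IsDuVal (l : List ℤ) : Prop := ∀ x ∈ l, x = 2

/-!
Write `m / q` for the value of `a`. In the matrix form of continued fractions, conjugacy makes the
value of `[a_r, …, a₁, c, b₁, …, b_s]` equal to `m² (c - 1) / (k m (c - 1) + 1)` for some integer
`k`. Type T then says that `m² (c - 1)` divides `(k m (c - 1) + 2)²`, hence also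
`4 (k m (c - 1) + 1)`. Being coprime to the second factor, it divides `4`, so `m = 2` and `c = 2`,
and both `a` and `b` have value `2 / 1`.
-/

section Ring

variable {R : Type*} [CommRing R]

/-- The matrix form of the Hirzebruch–Jung continued fraction: the product of the matrices
`!![x, -1; 1, 0]` over the entries `x` of the list. Each factor acts on fractions as the step
`t ↦ x - 1 / t`. -/
def hjMatrix (l : List R) : Matrix (Fin 2) (Fin 2) R :=
  (l.map fun x => !![x, -1; 1, 0]).prod

/-- The numerator of the Hirzebruch–Jung continued fraction given by the continuant recursion,
encoded as an entry of `hjMatrix`. -/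
def hjNum (l : List R) : R := hjMatrix l 0 0

/-- The denominator of the Hirzebruch–Jung continued fraction that goes with `hjNum`. The empty list
stands for the fraction `1 / 0`. -/
def hjDen (l : List R) : R := hjMatrix l 1 0

theorem hjMatrix_cons (x : R) (l : List R) :
    hjMatrix (x :: l) = !![x, -1; 1, 0] * hjMatrix l := by
  simp [hjMatrix]

theorem hjMatrix_singleton (x : R) : hjMatrix [x] = !![x, -1; 1, 0] := by
  simp [hjMatrix]

theorem hjMatrix_append (l t : List R) : hjMatrix (l ++ t) = hjMatrix l * hjMatrix t := by
  simp [hjMatrix]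

@[simp]
theorem hjNum_nil : hjNum ([] : List R) = 1 := by
  simp [hjNum, hjMatrix]

@[simp]
theorem hjDen_nil : hjDen ([] : List R) = 0 := by
  simp [hjDen, hjMatrix]

@[simp]
theorem hjNum_cons (x : R) (l : List R) : hjNum (x :: l) = x * hjNum l - hjDen l := by
  simp [hjNum, hjDen, hjMatrix_cons, Matrix.mul_apply, Fin.sum_univ_two, sub_eq_add_neg]

@[simp]
theorem hjDen_cons (x : R) (l : List R) : hjDen (x :: l) = hjNum l := by
  simp [hjNum, hjDen, hjMatrix_cons, Matrix.mul_apply, Fin.sum_univ_two]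

theorem det_hjMatrix (l : List R) : (hjMatrix l).det = 1 := by
  induction l with
  | nil => simp [hjMatrix]
  | cons x l ih =>
    rw [hjMatrix_cons, Matrix.det_mul, ih, Matrix.det_fin_two_of]
    ring

theorem hjNum_mul_sub_mul_hjDen_eq_one (l : List R) :
    hjNum l * hjMatrix l 1 1 - hjMatrix l 0 1 * hjDen l = 1 := by
  rw [hjNum, hjDen, ← Matrix.det_fin_two, det_hjMatrix]

theorem isCoprime_hjNum_hjDen (l : List R) : IsCoprime (hjNum l) (hjDen l) :=
  ⟨hjMatrix l 1 1, -hjMatrix l 0 1, by linear_combination hjNum_mul_sub_mul_hjDen_eq_one l⟩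

theorem hjMatrix_reverse (l : List R) :
    hjMatrix l.reverse =
      !![hjMatrix l 0 0, -hjMatrix l 1 0; -hjMatrix l 0 1, hjMatrix l 1 1] := by
  induction l with
  | nil => simp [hjMatrix, Matrix.one_fin_two]
  | cons x l ih =>
    rw [List.reverse_cons, hjMatrix_append, ih, hjMatrix_singleton, hjMatrix_cons,
      Matrix.mul_fin_two]
    simp [Matrix.mul_apply, Fin.sum_univ_two, mul_comm, add_comm]

theorem hjNum_reverse_append (l t : List R) :
    hjNum (l.reverse ++ t) = hjNum l * hjNum t - hjDen l * hjDen t := by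
  simp [hjNum, hjDen, hjMatrix_append, hjMatrix_reverse, Matrix.mul_apply, Fin.sum_univ_two,
    sub_eq_add_neg]

theorem hjDen_reverse_append (l t : List R) :
    hjDen (l.reverse ++ t) = -hjMatrix l 0 1 * hjNum t + hjMatrix l 1 1 * hjDen t := by
  simp [hjNum, hjDen, hjMatrix_append, hjMatrix_reverse, Matrix.mul_apply, Fin.sum_univ_two]

theorem hjNum_reverse_append_cons {a b : List R} (hnum : hjNum b = hjNum a)
    (hden : hjDen b = hjNum a - hjDen a) (c : R) :
    hjNum (a.reverse ++ c :: b) = hjNum a ^ 2 * (c - 1) := by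
  rw [hjNum_reverse_append, hjNum_cons, hjDen_cons, hnum, hden]
  ring

theorem hjDen_reverse_append_cons {a b : List R} (hnum : hjNum b = hjNum a)
    (hden : hjDen b = hjNum a - hjDen a) (c : R) :
    hjDen (a.reverse ++ c :: b) = -hjMatrix a 0 1 * hjNum a * (c - 1) + 1 := by
  rw [hjDen_reverse_append, hjNum_cons, hjDen_cons, hnum, hden]
  linear_combination hjNum_mul_sub_mul_hjDen_eq_one a

theorem sq_mul_dvd_four_of_sq_mul_dvd_sq {m e k : R} (h : m ^ 2 * e ∣ (k * m * e + 2) ^ 2) :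
    m ^ 2 * e ∣ 4 := by
  have hdvd : m ^ 2 * e ∣ 4 * (k * m * e + 1) := by
    rw [← dvd_add_right (Dvd.intro (k ^ 2 * e) rfl : m ^ 2 * e ∣ m ^ 2 * e * (k ^ 2 * e))]
    convert h using 1
    ring
  have hm : IsCoprime m (k * m * e + 1) := ⟨-(k * e), 1, by ring⟩
  have he : IsCoprime e (k * m * e + 1) := ⟨-(k * m), 1, by ring⟩
  exact (hm.pow_left.mul_left he).dvd_of_dvd_mul_right hdvd

end Ring

section Order

variable {R : Type*} [CommRing R] [LinearOrder R] [IsStrictOrderedRing R] {l : List R}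

theorem hjDen_nonneg_and_lt_hjNum (hl : ∀ x ∈ l, 2 ≤ x) : 0 ≤ hjDen l ∧ hjDen l < hjNum l := by
  induction l with
  | nil => simp
  | cons x l ih =>
    obtain ⟨hx, htail⟩ := List.forall_mem_cons.mp hl
    obtain ⟨hden, hlt⟩ := ih htail
    rw [hjNum_cons, hjDen_cons]
    exact ⟨by linarith, by nlinarith⟩

theorem hjDen_lt_hjNum (hl : ∀ x ∈ l, 2 ≤ x) : hjDen l < hjNum l :=
  (hjDen_nonneg_and_lt_hjNum hl).2

theorem hjNum_pos (hl : ∀ x ∈ l, 2 ≤ x) : 0 < hjNum l :=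
  (hjDen_nonneg_and_lt_hjNum hl).1.trans_lt (hjDen_lt_hjNum hl)

theorem hjDen_pos (hne : l ≠ []) (hl : ∀ x ∈ l, 2 ≤ x) : 0 < hjDen l := by
  obtain ⟨x, t, rfl⟩ := List.exists_cons_of_ne_nil hne
  rw [hjDen_cons]
  exact hjNum_pos (List.forall_mem_cons.mp hl).2

end Order

theorem hjValue_eq_hjNum_div_hjDen {l : List ℤ} (hl : ∀ x ∈ l, 2 ≤ x) :
    hjValue l = ((hjNum l : ℤ) : ℚ) / ((hjDen l : ℤ) : ℚ) := by
  induction l with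
  | nil => simp [hjValue]
  | cons x l ih =>
    have htail := (List.forall_mem_cons.mp hl).2
    have hnum : ((hjNum l : ℤ) : ℚ) ≠ 0 := mod_cast (hjNum_pos htail).ne'
    rw [hjValue, ih htail, one_div_div, hjNum_cons, hjDen_cons]
    push_cast
    field_simp

theorem hjNum_eq_and_hjDen_eq_of_hjValue_eq {l : List ℤ} (hl : IsString l) {n q : ℤ} (hq : 0 < q)
    (hnq : IsCoprime n q) (h : hjValue l = n / q) : hjNum l = n ∧ hjDen l = q := by
  rw [hjValue_eq_hjNum_div_hjDen hl.2] at h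
  exact Rat.div_int_inj (hjDen_pos hl.1 hl.2) hq
    (Int.isCoprime_iff_gcd_eq_one.mp (isCoprime_hjNum_hjDen l))
    (Int.isCoprime_iff_gcd_eq_one.mp hnq) h

theorem IsConjugate.hjNum_eq_and_hjDen_eq {a b : List ℤ} (h : IsConjugate a b) (ha : IsString a)
    (hb : IsString b) : hjNum b = hjNum a ∧ hjDen b = hjNum a - hjDen a := by
  obtain ⟨m, q, hq, hqm, hmq, hva, hvb⟩ := h
  have hmq : IsCoprime (m : ℤ) q := Nat.isCoprime_iff_coprime.mpr hmq
  have hmq' : IsCoprime (m : ℤ) (m - q) := by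
    simpa [sub_eq_neg_add] using hmq.neg_right.add_mul_left_right 1
  obtain ⟨hnum_a, hden_a⟩ :=
    hjNum_eq_and_hjDen_eq_of_hjValue_eq ha (by omega) hmq (by simpa using hva)
  obtain ⟨hnum_b, hden_b⟩ :=
    hjNum_eq_and_hjDen_eq_of_hjValue_eq hb (by omega) hmq' (by simpa using hvb)
  rw [hnum_a, hden_a]
  exact ⟨hnum_b, hden_b⟩

theorem IsTString.hjNum_dvd_hjDen_add_one_sq {l : List ℤ} (h : IsTString l) :
    hjNum l ∣ (hjDen l + 1) ^ 2 := by
  obtain ⟨hl, n, q, hq, -, hnq, hv, hdvd⟩ := h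
  obtain ⟨hnum, hden⟩ := hjNum_eq_and_hjDen_eq_of_hjValue_eq hl (by omega)
    (Nat.isCoprime_iff_coprime.mpr hnq) (by simpa using hv)
  rw [hnum, hden]
  exact_mod_cast hdvd

theorem isDuVal_of_hjNum_eq_hjDen_add_one {l : List ℤ} (hl : ∀ x ∈ l, 2 ≤ x)
    (h : hjNum l = hjDen l + 1) : IsDuVal l := by
  induction l with
  | nil => simp [IsDuVal]
  | cons x l ih =>
    obtain ⟨hx, htail⟩ := List.forall_mem_cons.mp hl
    rw [hjNum_cons, hjDen_cons] at h
    have hx2 : x = 2 := by nlinarith [hjDen_lt_hjNum htail, hjNum_pos htail]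
    subst hx2
    exact List.forall_mem_cons.mpr ⟨rfl, ih htail (by linarith)⟩

theorem eq_two_and_eq_one_of_sq_mul_dvd_four {m e : ℤ} (hm : 2 ≤ m) (he : 1 ≤ e)
    (h : m ^ 2 * e ∣ 4) : m = 2 ∧ e = 1 := by
  have hle : m ^ 2 * e ≤ 4 := Int.le_of_dvd (by norm_num) h
  exact ⟨by nlinarith, by nlinarith⟩

/-- If `[a₁,…,a_r]` and `[b₁,…,b_s]` are conjugate strings, `c ≥ 2`, and the
concatenated string `[a_r,…,a₁, c, b₁,…,b_s]` is of type T, then it is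
Du Val: `c = 2` and all `aᵢ` and all `bⱼ` equal `2`. -/
theorem tString_of_conjugate_glue_isDuVal (a b : List ℤ) (c : ℤ)
    (ha : IsString a) (hb : IsString b) (hc : 2 ≤ c)
    (hconj : IsConjugate a b) (hT : IsTString (a.reverse ++ c :: b)) :
    c = 2 ∧ (∀ x ∈ a, x = 2) ∧ (∀ x ∈ b, x = 2) := by
  obtain ⟨hnum, hden⟩ := hconj.hjNum_eq_and_hjDen_eq ha hb
  have hdvd : hjNum a ^ 2 * (c - 1) ∣ (-hjMatrix a 0 1 * hjNum a * (c - 1) + 2) ^ 2 := by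
    have h := hT.hjNum_dvd_hjDen_add_one_sq
    rw [hjNum_reverse_append_cons hnum hden, hjDen_reverse_append_cons hnum hden, add_assoc,
      one_add_one_eq_two] at h
    exact h
  have hpos : 0 < hjDen a := hjDen_pos ha.1 ha.2
  have hlt : hjDen a < hjNum a := hjDen_lt_hjNum ha.2
  obtain ⟨hnum_two, hc_one⟩ := eq_two_and_eq_one_of_sq_mul_dvd_four (by omega) (by omega)
    (sq_mul_dvd_four_of_sq_mul_dvd_sq hdvd)
  exact ⟨by omega, isDuVal_of_hjNum_eq_hjDen_add_one ha.2 (by omega),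
    isDuVal_of_hjNum_eq_hjDen_add_one hb.2 (by omega)⟩
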